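/- Freeness of top cohomology through reduction (Theorem 3.3(2), Theorem A'): if n ≥ 1, H^{n−1}(C̄^•) = 0 and H^n(C̄^•) is a free F-module of rank l, then H^n(C^•) is a finite free 𝒪-module of rank l. -/

import Mathlib

open scoped BigOperators

noncomputable section

namespace HS

/-- Transport an element of a ℤ-indexed family along an equality of indices. -/
def castC {C : ℤ → Type} {i j : ℤ} (h : i = j) (x : C i) : C j := h ▸ x

/-- Transport, as a linear map. -/
def castL (O : Type) [CommRing O] (C : ℤ → Type) [∀ j, AddCommGroup (C j)]
    [∀ j, Module O (C j)] {i j : ℤ} (h : i = j) : C i →ₗ[O] C j where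
  toFun x := h ▸ x
  map_add' := by cases h; intro x y; rfl
  map_smul' := by cases h; intro c x; rfl

/-!
Put `M = Cⁿ / im ∂ⁿ⁻¹`.

* `ϖ` is a nonzerodivisor on `M`: if `ϖ m = ∂ x`, then `x` is a cocycle modulo `ϖ`, hence
  `x = e + ϖ z` with `∂ e = 0`; so `ϖ m = ϖ ∂ z`, and `m = ∂ z` since `Cⁿ` has no `ϖ`-torsion.
* Lifting a basis of `M / ϖ M` gives `p : 𝒪ˡ → Cⁿ`. The map `𝒪ˡ × Cⁿ⁻¹ → Cⁿ`, `(a, y) ↦ p a + ∂ y`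
  is surjective modulo `ϖ`, hence surjective by completeness, while `𝒪ˡ → M` is injective modulo
  `ϖ`, hence injective because `𝒪ˡ` is separated and `ϖ` is regular on `M`. Surjectivity is
  lifted on `Cⁿ` rather than on `M`, as `M` is not known in advance to be separated.
-/

section AdicTopology

variable {R M N : Type*} [CommRing R] {I : Ideal R}
  [AddCommGroup M] [Module R M] [AddCommGroup N] [Module R N]

theorem smodEq_smul_top_map (g : M →ₗ[R] N) {x y : M}
    (h : x ≡ y [SMOD (I • ⊤ : Submodule R M)]) :
    g x ≡ g y [SMOD (I • ⊤ : Submodule R N)] := by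
  rw [SModEq.sub_mem] at h ⊢
  rw [← map_sub]
  exact Submodule.smul_top_le_comap_smul_top I g h

theorem isPrecomplete_prod [IsPrecomplete I M] [IsPrecomplete I N] : IsPrecomplete I (M × N) := by
  refine ⟨fun s hs ↦ ?_⟩
  obtain ⟨x, hx⟩ := IsPrecomplete.prec' (I := I) (fun k ↦ (s k).1)
    fun hmn ↦ smodEq_smul_top_map (LinearMap.fst R M N) (hs hmn)
  obtain ⟨y, hy⟩ := IsPrecomplete.prec' (I := I) (fun k ↦ (s k).2)
    fun hmn ↦ smodEq_smul_top_map (LinearMap.snd R M N) (hs hmn)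
  refine ⟨(x, y), fun k ↦ ?_⟩
  simpa using (smodEq_smul_top_map (LinearMap.inl R M N) (hx k)).add
    (smodEq_smul_top_map (LinearMap.inr R M N) (hy k))

variable {ι : Type*} {E : ι → Type*} [∀ i, AddCommGroup (E i)] [∀ i, Module R (E i)]

theorem isPrecomplete_pi [Finite ι] [∀ i, IsPrecomplete I (E i)] :
    IsPrecomplete I (∀ i, E i) := by
  classical
  have := Fintype.ofFinite ι
  refine ⟨fun s hs ↦ ?_⟩
  choose x hx using fun i ↦ IsPrecomplete.prec' (I := I) (fun k ↦ s k i)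
    fun hmn ↦ smodEq_smul_top_map (LinearMap.proj i) (hs hmn)
  refine ⟨x, fun k ↦ ?_⟩
  simpa [Finset.univ_sum_single] using SModEq.sum (s := Finset.univ) fun i _ ↦
    smodEq_smul_top_map (LinearMap.single R E i) (hx i k)

theorem isHausdorff_pi [∀ i, IsHausdorff I (E i)] : IsHausdorff I (∀ i, E i) :=
  ⟨fun x hx ↦ funext fun i ↦ IsHausdorff.haus' (I := I) (x i) fun k ↦
    smodEq_smul_top_map (LinearMap.proj i) (hx k)⟩

end AdicTopology

section PrincipalIdeal

variable {R M N : Type*} [CommRing R] {ϖ : R}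
  [AddCommGroup M] [Module R M] [AddCommGroup N] [Module R N]

theorem smodEq_span_singleton_pow_smul_top_iff {k : ℕ} {x y : M} :
    x ≡ y [SMOD (Ideal.span {ϖ} ^ k • ⊤ : Submodule R M)] ↔ ∃ z, x - y = ϖ ^ k • z := by
  simp [SModEq.sub_mem, Ideal.span_singleton_pow, Submodule.ideal_span_singleton_smul,
    Submodule.mem_smul_pointwise_iff_exists, eq_comm]

theorem isHausdorff_span_singleton_iff :
    IsHausdorff (Ideal.span {ϖ}) M ↔ ∀ x : M, (∀ k : ℕ, ∃ y, x = ϖ ^ k • y) → x = 0 := by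
  simp only [isHausdorff_iff, smodEq_span_singleton_pow_smul_top_iff, sub_zero]

theorem isPrecomplete_span_singleton_iff :
    IsPrecomplete (Ideal.span {ϖ}) M ↔
      ∀ s : ℕ → M, (∀ k, ∃ y, s (k + 1) - s k = ϖ ^ k • y) →
        ∃ x, ∀ k, ∃ y, x - s k = ϖ ^ k • y := by
  simp only [isPrecomplete_iff, ← smodEq_span_singleton_pow_smul_top_iff]
  refine forall_congr' fun s ↦ ⟨fun h hs ↦ ?_, fun h hs ↦ ?_⟩
  · have hcauchy : AdicCompletion.IsAdicCauchy (Ideal.span {ϖ}) M s :=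
      (AdicCompletion.AdicCauchySequence.mk _ M s fun k ↦ (hs k).symm).property
    exact (h fun hmn ↦ hcauchy hmn).imp fun x hx k ↦ (hx k).symm
  · exact (h fun k ↦ (hs k.le_succ).symm).imp fun x hx k ↦ (hx k).symm

theorem injective_of_injective_mod [IsHausdorff (Ideal.span {ϖ}) M] (hϖ : IsSMulRegular N ϖ)
    (g : M →ₗ[R] N) (h : ∀ x z, g x = ϖ • z → ∃ x', x = ϖ • x') : Function.Injective g := by
  rw [injective_iff_map_eq_zero]
  have hdvd : ∀ (k : ℕ) (x : M), g x = 0 → ∃ y, x = ϖ ^ k • y := by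
    intro k
    induction k with
    | zero => exact fun x _ ↦ ⟨x, by simp⟩
    | succ k ih =>
      intro x hx
      obtain ⟨x', rfl⟩ := h x 0 (by simpa using hx)
      have hx' : g x' = 0 := hϖ.right_eq_zero_of_smul (by rwa [← map_smul])
      obtain ⟨y, rfl⟩ := ih x' hx'
      exact ⟨y, by rw [pow_succ', mul_smul]⟩
  exact fun x hx ↦ isHausdorff_span_singleton_iff.mp ‹_› x fun k ↦ hdvd k x hx

end PrincipalIdeal

section Cokernel

variable {R P B D : Type*} [CommRing R] {ϖ : R} [AddCommGroup P] [Module R P]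
  [AddCommGroup B] [Module R B] [AddCommGroup D] [Module R D]

theorem isSMulRegular_quotient_range (hϖ : IsSMulRegular D ϖ) (f : B →ₗ[R] D)
    (hexact : ∀ x z, f x = ϖ • z → ∃ y ∈ LinearMap.ker f, ∃ z, x = y + ϖ • z) :
    IsSMulRegular (D ⧸ LinearMap.range f) ϖ := by
  rw [isSMulRegular_quotient_iff_mem_of_smul_mem]
  rintro m ⟨x, hx⟩
  obtain ⟨y, hy, z, rfl⟩ := hexact x m hx
  refine ⟨z, hϖ ?_⟩
  simpa [LinearMap.mem_ker.mp hy] using hx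

theorem surjective_coprod_of_surjective_mod {I : Ideal R} [IsPrecomplete I P] [IsPrecomplete I B]
    [IsHausdorff I D] (p : P →ₗ[R] D) (f : B →ₗ[R] D)
    (h : ∀ x, ∃ a y, p a + f y ≡ x [SMOD (I • ⊤ : Submodule R D)]) :
    Function.Surjective (p.coprod f) := by
  have : IsPrecomplete I (P × B) := isPrecomplete_prod
  refine surjective_of_mkQ_comp_surjective (I := I) fun q ↦ ?_
  obtain ⟨x, rfl⟩ := Submodule.mkQ_surjective _ q
  obtain ⟨a, y, hx⟩ := h x
  exact ⟨(a, y), hx⟩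

theorem bijective_mkQ_range_comp_of_bijective_mod [IsAdicComplete (Ideal.span {ϖ}) P]
    [IsPrecomplete (Ideal.span {ϖ}) B] [IsHausdorff (Ideal.span {ϖ}) D]
    (p : P →ₗ[R] D) (f : B →ₗ[R] D) (hϖ : IsSMulRegular (D ⧸ LinearMap.range f) ϖ)
    (hsurj : ∀ x, ∃ a y z, x = p a + f y + ϖ • z)
    (hinj : ∀ a y z, p a = f y + ϖ • z → ∃ a', a = ϖ • a') :
    Function.Bijective ((LinearMap.range f).mkQ ∘ₗ p) := by
  constructor
  · refine injective_of_injective_mod hϖ _ fun a q hq ↦ ?_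
    obtain ⟨z, rfl⟩ := Submodule.mkQ_surjective _ q
    obtain ⟨y, hy⟩ : p a - ϖ • z ∈ LinearMap.range f := (Submodule.Quotient.eq _).mp hq
    exact hinj a y z (by rw [hy, sub_add_cancel])
  · have hcoprod : Function.Surjective (p.coprod f) := by
      refine surjective_coprod_of_surjective_mod (I := Ideal.span {ϖ}) p f fun x ↦ ?_
      obtain ⟨a, y, z, hx⟩ := hsurj x
      refine ⟨a, y, SModEq.symm ?_⟩
      rw [← pow_one (Ideal.span {ϖ}), smodEq_span_singleton_pow_smul_top_iff]
      exact ⟨z, by rw [hx, pow_one, add_sub_cancel_left]⟩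
    intro q
    obtain ⟨x, rfl⟩ := Submodule.mkQ_surjective _ q
    obtain ⟨⟨a, y⟩, rfl⟩ := hcoprod x
    exact ⟨a, (Submodule.Quotient.eq _).mpr ⟨-y, by simp⟩⟩

theorem top_cohomology_free_general {ι : Type*} [Fintype ι] [IsAdicComplete (Ideal.span {ϖ}) R]
    [IsPrecomplete (Ideal.span {ϖ}) B] [IsHausdorff (Ideal.span {ϖ}) D]
    (hϖ : IsSMulRegular D ϖ) (f : B →ₗ[R] D)
    (hexact : ∀ x z, f x = ϖ • z → ∃ y ∈ LinearMap.ker f, ∃ z, x = y + ϖ • z)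
    (b : ι → D)
    (hspan : ∀ x, ∃ (a : ι → R) (y : B) (z : D), x = ∑ i, a i • b i + f y + ϖ • z)
    (hindep : ∀ (a : ι → R) (y : B) (z : D), ∑ i, a i • b i = f y + ϖ • z → ∀ i, ϖ ∣ a i) :
    ∃ β : Module.Basis ι R (D ⧸ LinearMap.range f), ∀ i, β i = (LinearMap.range f).mkQ (b i) := by
  classical
  have : IsAdicComplete (Ideal.span {ϖ}) (ι → R) :=
    { toIsHausdorff := isHausdorff_pi, toIsPrecomplete := isPrecomplete_pi }
  have hbij := bijective_mkQ_range_comp_of_bijective_mod (Fintype.linearCombination R b) f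
    (isSMulRegular_quotient_range hϖ f hexact) hspan fun a y z h ↦ by
      choose a' ha' using hindep a y z h
      exact ⟨a', funext ha'⟩
  exact ⟨.ofEquivFun (LinearEquiv.ofBijective _ hbij).symm, fun i ↦ by simp⟩

end Cokernel

section Transport

variable {O : Type} [CommRing O] {C : ℤ → Type} [∀ j, AddCommGroup (C j)] [∀ j, Module O (C j)]

theorem exists_eq_smul_of_castL_eq_smul {i j : ℤ} (h : i = j) {ϖ : O} {x : C i} {z : C j}
    (hx : castL O C h x = ϖ • z) : ∃ z', x = ϖ • z' := by
  subst h
  exact ⟨z, hx⟩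

theorem d_castC_d_eq_zero (d : ∀ j : ℤ, C j →ₗ[O] C (j + 1))
    (hcx : ∀ (j : ℤ) (x : C j), d (j + 1) (d j x) = 0) {i j : ℤ} (h : i + 1 = j) (x : C i) :
    d j (castC h (d i x)) = 0 := by
  subst h
  exact hcx i x

end Transport

/-- freeness of the top cohomology through reduction (Theorem A′, part 2).
With `𝒪`, `ϖ`, and the complex `C^•` as in Theorem A′, if `n ≥ 1`, `H^{n-1}(C̄^•) = 0`, and
`H^n(C̄^•)` is a free `F = 𝒪/ϖ𝒪`-module of rank `l` (expressed by an `l`-element subset of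
`C^n` which generates and is independent modulo `ϖC^n + im ∂^{n-1}`), then
`H^n(C^•) = C^n / im ∂^{n-1}` is a finite free `𝒪`-module of rank `l`. -/
theorem top_cohomology_free
    (O : Type) [CommRing O] (ϖ : O)
    (hnzd : ∀ x : O, ϖ * x = 0 → x = 0)
    (hsep : ∀ x : O, (∀ k : ℕ, ∃ y, x = ϖ ^ k * y) → x = 0)
    (hcompl : ∀ g : ℕ → O, (∀ k, ∃ y, g (k + 1) - g k = ϖ ^ k * y) →
      ∃ x, ∀ k, ∃ y, x - g k = ϖ ^ k * y)
    (n : ℕ) (hn : 1 ≤ n)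
    (C : ℤ → Type) [∀ j, AddCommGroup (C j)] [∀ j, Module O (C j)]
    (d : ∀ j : ℤ, C j →ₗ[O] C (j + 1))
    (hcx : ∀ (j : ℤ) (x : C j), d (j + 1) (d j x) = 0)
    (hbd : ∀ j : ℤ, j < 0 ∨ (n : ℤ) < j → Subsingleton (C j))
    (hflat : ∀ j, Module.Flat O (C j))
    (hCsep : ∀ (j : ℤ) (x : C j), (∀ k : ℕ, ∃ y, x = ϖ ^ k • y) → x = 0)
    (hCcompl : ∀ (j : ℤ) (g : ℕ → C j), (∀ k, ∃ y, g (k + 1) - g k = ϖ ^ k • y) →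
      ∃ x, ∀ k, ∃ y, x - g k = ϖ ^ k • y)
    (l : ℕ)
    (hredprev : ∀ x : C ((n : ℤ) - 1), (∃ z, d ((n : ℤ) - 1) x = ϖ • z) →
      ∃ (y : C ((n : ℤ) - 1 - 1)) (z : C ((n : ℤ) - 1)),
        x = castC (C := C) (show (n : ℤ) - 1 - 1 + 1 = (n : ℤ) - 1 by omega)
          (d ((n : ℤ) - 1 - 1) y) + ϖ • z)
    (hfree : ∃ b : Fin l → C (n : ℤ),
      (∀ x : C (n : ℤ), ∃ (aa : Fin l → O) (y : C ((n : ℤ) - 1)) (z : C (n : ℤ)),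
        x = ∑ i, aa i • b i +
          castC (C := C) (show (n : ℤ) - 1 + 1 = (n : ℤ) by omega) (d ((n : ℤ) - 1) y) +
          ϖ • z) ∧
      (∀ aa : Fin l → O, (∃ (y : C ((n : ℤ) - 1)) (z : C (n : ℤ)),
          ∑ i, aa i • b i =
            castC (C := C) (show (n : ℤ) - 1 + 1 = (n : ℤ) by omega) (d ((n : ℤ) - 1) y) +
            ϖ • z) →
        ∀ i, ∃ c : O, aa i = ϖ * c)) :
    Nonempty (Module.Basis (Fin l) O
      (C (n : ℤ) ⧸ LinearMap.range
        ((castL O C (show (n : ℤ) - 1 + 1 = (n : ℤ) by omega)).comp (d ((n : ℤ) - 1))))) := by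
  obtain ⟨b, hspan, hindep⟩ := hfree
  have : IsAdicComplete (Ideal.span {ϖ}) O :=
    { toIsHausdorff := isHausdorff_span_singleton_iff.mpr hsep
      toIsPrecomplete := isPrecomplete_span_singleton_iff.mpr hcompl }
  have : IsPrecomplete (Ideal.span {ϖ}) (C ((n : ℤ) - 1)) :=
    isPrecomplete_span_singleton_iff.mpr (hCcompl _)
  have : IsHausdorff (Ideal.span {ϖ}) (C n) := isHausdorff_span_singleton_iff.mpr (hCsep _)
  have hϖ : IsSMulRegular (C n) ϖ :=
    have := hflat n
    Module.Flat.isSMulRegular_of_nonZeroDivisors (mem_nonZeroDivisors_iff_left.mpr hnzd)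
  refine (top_cohomology_free_general hϖ _ (fun x w hx ↦ ?_) b hspan
    fun a y z h ↦ hindep a ⟨y, z, h⟩).nonempty
  obtain ⟨y, z, hx'⟩ := hredprev x (exists_eq_smul_of_castL_eq_smul _ hx)
  exact ⟨_, by simp [d_castC_d_eq_zero d hcx], z, hx'⟩

end HS
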